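/- (Non-strict Finsler's lemma) Let M, N be real symmetric n×n matrices. Then there exists α ∈ ℝ such that M + αN ⪰ 0 if and only if both of the following hold: (NS2) every x ∈ ℝⁿ with xᵀNx = 0 satisfies xᵀMx ≥ 0, and (NS3) every x ∈ ℝⁿ with Nx = 0 and xᵀMx = 0 satisfies Mx = 0. -/

import Mathlib

/-!
Write `m(x) = xᵀMx` and `q(x) = xᵀNx`.

If some `M + αN` is positive semidefinite, (NS2) is immediate, and (NS3) holds because the
isotropic vectors of a positive semidefinite form are exactly the kernel of its matrix.

For the converse there are two cases.

* `q` takes both signs (`exists_of_indefinite`). If `q x > 0 > q y`, then `q` vanishes at two points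
  `x + t • y`, with parameters `t₁ < 0 < t₂` satisfying `t₁ t₂ = q x / q y`. A positive combination
  of `m ≥ 0` at these two points cancels the cross term and gives `m x * q y ≤ m y * q x`
  (`cross_le`). So every lower bound on `α` forced by a vector with `q > 0` is at most every upper
  bound forced by a vector with `q < 0`, and a separating `α` exists.
* `q` is semidefinite, say `q ≥ 0` (`exists_of_nonneg`). Let `L = ker M ∩ ker N` and let `W` be a
  complement of `L`. On `W \ {0}` the conditions make `m` strictly positive wherever `q` vanishes,
  so compactness of the unit sphere of `W` gives a single `α` with `m + α q > 0` there. Vectors of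
  `L` do not affect either form, so this `α` works everywhere.
-/

open Matrix

section Finsler

variable {n : ℕ}

theorem quad_add_smul {M : Matrix (Fin n) (Fin n) ℝ} (hM : M.IsSymm) (x y : Fin n → ℝ) (t : ℝ) :
    (x + t • y) ⬝ᵥ (M *ᵥ (x + t • y)) =
      x ⬝ᵥ (M *ᵥ x) + 2 * t * (x ⬝ᵥ (M *ᵥ y)) + t ^ 2 * (y ⬝ᵥ (M *ᵥ y)) := by
  have h : y ⬝ᵥ (M *ᵥ x) = x ⬝ᵥ (M *ᵥ y) := by
    rw [dotProduct_mulVec, ← mulVec_transpose, hM.eq, dotProduct_comm]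
  simp only [mulVec_add, mulVec_smul, add_dotProduct, dotProduct_add, smul_dotProduct,
    dotProduct_smul, smul_eq_mul, h]
  ring

theorem quad_pencil (M N : Matrix (Fin n) (Fin n) ℝ) (α : ℝ) (x : Fin n → ℝ) :
    x ⬝ᵥ ((M + α • N) *ᵥ x) = x ⬝ᵥ (M *ᵥ x) + α * (x ⬝ᵥ (N *ᵥ x)) := by
  simp [add_mulVec, smul_mulVec, dotProduct_add]

theorem mulVec_eq_zero_of_quad_eq_zero {P : Matrix (Fin n) (Fin n) ℝ} (hP : P.IsSymm)
    (h : ∀ x : Fin n → ℝ, 0 ≤ x ⬝ᵥ (P *ᵥ x)) {x : Fin n → ℝ} (hx : x ⬝ᵥ (P *ᵥ x) = 0) :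
    P *ᵥ x = 0 := by
  have hpsd : P.PosSemidef :=
    .of_dotProduct_mulVec_nonneg (by simpa [IsHermitian] using hP.eq) (by simpa using h)
  exact (hpsd.dotProduct_mulVec_zero_iff x).1 (by simpa using hx)

/-- A real quadratic with constant coefficient `a > 0` and leading coefficient `d < 0` has two
roots of opposite signs. -/
theorem exists_roots {a b d : ℝ} (ha : 0 < a) (hd : d < 0) :
    ∃ s t : ℝ, s < 0 ∧ 0 < t ∧ a + 2 * s * b + s ^ 2 * d = 0 ∧
      a + 2 * t * b + t ^ 2 * d = 0 ∧ s * t * d = a := by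
  have hpos : 0 < b ^ 2 - a * d := by nlinarith [mul_pos ha (neg_pos.2 hd), sq_nonneg b]
  obtain ⟨r, hr, hr2⟩ : ∃ r : ℝ, 0 < r ∧ r ^ 2 = b ^ 2 - a * d :=
    ⟨_, Real.sqrt_pos.2 hpos, Real.sq_sqrt hpos.le⟩
  have had : a * d < 0 := mul_neg_of_pos_of_neg ha hd
  have hb := abs_lt_of_sq_lt_sq' (a := b) (b := r) (by linarith) hr.le
  have hd' := hd.ne
  refine ⟨(-b + r) / d, (-b - r) / d, div_neg_of_pos_of_neg (by linarith) hd,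
    div_pos_of_neg_of_neg (by linarith) hd, ?_, ?_, ?_⟩ <;> field_simp <;> linarith

theorem cross_le {M N : Matrix (Fin n) (Fin n) ℝ} (hM : M.IsSymm) (hN : N.IsSymm)
    (h : ∀ x : Fin n → ℝ, x ⬝ᵥ (N *ᵥ x) = 0 → 0 ≤ x ⬝ᵥ (M *ᵥ x)) {x y : Fin n → ℝ}
    (hx : 0 < x ⬝ᵥ (N *ᵥ x)) (hy : y ⬝ᵥ (N *ᵥ y) < 0) :
    (x ⬝ᵥ (M *ᵥ x)) * (y ⬝ᵥ (N *ᵥ y)) ≤ (y ⬝ᵥ (M *ᵥ y)) * (x ⬝ᵥ (N *ᵥ x)) := by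
  obtain ⟨s, t, hs, ht, hs0, ht0, hst⟩ := exists_roots (b := x ⬝ᵥ (N *ᵥ y)) hx hy
  have h1 := h (x + s • y) (by rw [quad_add_smul hN, hs0])
  have h2 := h (x + t • y) (by rw [quad_add_smul hN, ht0])
  rw [quad_add_smul hM] at h1 h2
  generalize x ⬝ᵥ (M *ᵥ x) = mx at *
  generalize y ⬝ᵥ (M *ᵥ y) = my at *
  generalize x ⬝ᵥ (M *ᵥ y) = c at *
  -- The weights `t` and `-s` cancel the cross term `c`.
  have h3 : 0 ≤ (t - s) * (mx - s * t * my) := by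
    nlinarith [mul_nonneg ht.le h1, mul_nonneg (neg_pos.2 hs).le h2]
  have h4 : 0 ≤ mx - s * t * my := nonneg_of_mul_nonneg_right h3 (by linarith)
  rw [← hst]
  nlinarith [mul_nonneg h4 (neg_pos.2 hy).le]

theorem exists_of_indefinite {M N : Matrix (Fin n) (Fin n) ℝ} (hM : M.IsSymm) (hN : N.IsSymm)
    (h : ∀ x : Fin n → ℝ, x ⬝ᵥ (N *ᵥ x) = 0 → 0 ≤ x ⬝ᵥ (M *ᵥ x)) {u v : Fin n → ℝ}
    (hu : 0 < u ⬝ᵥ (N *ᵥ u)) (hv : v ⬝ᵥ (N *ᵥ v) < 0) :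
    ∃ α : ℝ, ∀ x : Fin n → ℝ, 0 ≤ x ⬝ᵥ (M *ᵥ x) + α * (x ⬝ᵥ (N *ᵥ x)) := by
  obtain ⟨α, hα1, hα2⟩ := exists_between_of_forall_le
    (s := (fun x : Fin n → ℝ => -(x ⬝ᵥ (M *ᵥ x)) / (x ⬝ᵥ (N *ᵥ x))) '' {x | 0 < x ⬝ᵥ (N *ᵥ x)})
    (t := (fun x : Fin n → ℝ => (x ⬝ᵥ (M *ᵥ x)) / -(x ⬝ᵥ (N *ᵥ x))) '' {x | x ⬝ᵥ (N *ᵥ x) < 0})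
    (Set.Nonempty.image _ ⟨u, hu⟩) (Set.Nonempty.image _ ⟨v, hv⟩) (by
      rintro _ ⟨x, hx, rfl⟩ _ ⟨y, hy, rfl⟩
      have hy' : 0 < -(y ⬝ᵥ (N *ᵥ y)) := neg_pos.2 hy
      have := cross_le hM hN h hx hy
      exact (div_le_div_iff₀ hx hy').2 (by linarith))
  refine ⟨α, fun x => ?_⟩
  rcases lt_trichotomy (x ⬝ᵥ (N *ᵥ x)) 0 with hx | hx | hx
  · have := hα2 ⟨x, hx, rfl⟩
    have := (le_div_iff₀ (neg_pos.2 hx)).1 this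
    linarith
  · simpa [hx] using h x hx
  · have := hα1 ⟨x, hx, rfl⟩
    have := (div_le_iff₀ hx).1 this
    linarith

theorem exists_of_nonneg {M N : Matrix (Fin n) (Fin n) ℝ} (hM : M.IsSymm) (hN : N.IsSymm)
    (h : ∀ x : Fin n → ℝ, x ⬝ᵥ (N *ᵥ x) = 0 → 0 ≤ x ⬝ᵥ (M *ᵥ x))
    (h' : ∀ x : Fin n → ℝ, N *ᵥ x = 0 → x ⬝ᵥ (M *ᵥ x) = 0 → M *ᵥ x = 0)
    (hq : ∀ x : Fin n → ℝ, 0 ≤ x ⬝ᵥ (N *ᵥ x)) :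
    ∃ α : ℝ, ∀ x : Fin n → ℝ, 0 ≤ x ⬝ᵥ (M *ᵥ x) + α * (x ⬝ᵥ (N *ᵥ x)) := by
  set L : Submodule ℝ (Fin n → ℝ) := LinearMap.ker M.mulVecLin ⊓ LinearMap.ker N.mulVecLin
  obtain ⟨W, hLW⟩ := Submodule.exists_isCompl L
  have hcomp : IsCompact (Metric.sphere (0 : Fin n → ℝ) 1 ∩ W) :=
    (isCompact_sphere _ _).inter_right W.closed_of_finiteDimensional
  have hstrict : ∀ x ∈ W, x ≠ 0 → x ⬝ᵥ (N *ᵥ x) = 0 → 0 < x ⬝ᵥ (M *ᵥ x) := by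
    intro x hxW hx0 hx
    refine lt_of_le_of_ne (h x hx) fun hm => hx0 ?_
    have hNx := mulVec_eq_zero_of_quad_eq_zero hN hq hx
    have hxL : x ∈ L := ⟨h' x hNx hm.symm, hNx⟩
    exact (Submodule.disjoint_def.1 hLW.disjoint) x hxL hxW
  -- The sets `{m + k q > 0}` increase with `k` because `q ≥ 0`, so one of them contains the sphere.
  obtain ⟨k, hk⟩ := hcomp.elim_directed_cover
    (fun k : ℕ => {x : Fin n → ℝ | 0 < x ⬝ᵥ (M *ᵥ x) + k * (x ⬝ᵥ (N *ᵥ x))})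
    (fun k => isOpen_lt continuous_const (by fun_prop))
    (by
      rintro x ⟨hx1, hxW⟩
      have hx0 : x ≠ 0 := by rintro rfl; simp at hx1
      rw [Set.mem_iUnion]
      rcases (hq x).eq_or_lt with hx | hx
      · exact ⟨0, by simpa using hstrict x hxW hx0 hx.symm⟩
      · obtain ⟨k, hk⟩ := exists_nat_gt (-(x ⬝ᵥ (M *ᵥ x)) / (x ⬝ᵥ (N *ᵥ x)))
        have := (div_lt_iff₀ hx).1 hk
        exact ⟨k, by simp only [Set.mem_ofPred_eq]; linarith⟩)
    (directed_of_isDirected_le (by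
      intro i j hij x hx
      simp only [Set.mem_ofPred_eq] at hx ⊢
      have : (i : ℝ) * (x ⬝ᵥ (N *ᵥ x)) ≤ j * (x ⬝ᵥ (N *ᵥ x)) :=
        mul_le_mul_of_nonneg_right (by exact_mod_cast hij) (hq x)
      linarith))
  refine ⟨k, fun x => ?_⟩
  obtain ⟨z, hz, y, hy, rfl⟩ : ∃ z ∈ L, ∃ y ∈ W, z + y = x :=
    Submodule.mem_sup.1 (by rw [hLW.sup_eq_top]; trivial)
  have hMz : M *ᵥ z = 0 := hz.1
  have hNz : N *ᵥ z = 0 := hz.2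
  have eM := quad_add_smul hM y z 1
  have eN := quad_add_smul hN y z 1
  simp only [one_smul, hMz, hNz, dotProduct_zero, mul_zero, add_zero] at eM eN
  rw [add_comm z y, eM, eN]
  rcases eq_or_ne y 0 with rfl | hy0
  · simp
  have hny : 0 < ‖y‖ := norm_pos_iff.2 hy0
  have := hk (a := ‖y‖⁻¹ • y) ⟨by simp [norm_smul, hny.ne'], W.smul_mem _ hy⟩
  simp only [Set.mem_ofPred_eq, mulVec_smul, smul_dotProduct, dotProduct_smul, smul_eq_mul] at this
  have h2 : 0 < (‖y‖⁻¹ * ‖y‖⁻¹) * (y ⬝ᵥ (M *ᵥ y) + k * (y ⬝ᵥ (N *ᵥ y))) := by linarith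
  exact (pos_of_mul_pos_right h2 (by positivity)).le

end Finsler

/-- Non-strict Finsler's lemma: `∃ α, M + α N ⪰ 0` iff (NS2) and (NS3) hold. -/
theorem stmt_2 {n : ℕ} (M N : Matrix (Fin n) (Fin n) ℝ)
    (hM : M.IsSymm) (hN : N.IsSymm) :
    (∃ α : ℝ, ∀ x : Fin n → ℝ, 0 ≤ x ⬝ᵥ ((M + α • N) *ᵥ x)) ↔
      ((∀ x : Fin n → ℝ, x ⬝ᵥ (N *ᵥ x) = 0 → 0 ≤ x ⬝ᵥ (M *ᵥ x)) ∧
       (∀ x : Fin n → ℝ, N *ᵥ x = 0 → x ⬝ᵥ (M *ᵥ x) = 0 → M *ᵥ x = 0)) := by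
  constructor
  · rintro ⟨α, hα⟩
    refine ⟨fun x hx => ?_, fun x hx hm => ?_⟩
    · simpa [quad_pencil, hx] using hα x
    · have := mulVec_eq_zero_of_quad_eq_zero (hM.add (hN.smul α)) hα (x := x)
        (by simp [quad_pencil, hx, hm])
      simpa [add_mulVec, smul_mulVec, hx] using this
  · rintro ⟨h, h'⟩
    simp only [quad_pencil]
    by_cases hpos : ∀ x : Fin n → ℝ, 0 ≤ x ⬝ᵥ (N *ᵥ x)
    · exact exists_of_nonneg hM hN h h' hpos
    by_cases hneg : ∀ x : Fin n → ℝ, x ⬝ᵥ (N *ᵥ x) ≤ 0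
    -- A negative semidefinite `N` is handled by replacing `(N, α)` with `(-N, -α)`.
    · obtain ⟨α, hα⟩ := exists_of_nonneg (M := M) (N := -N) hM hN.neg
        (by simpa [neg_mulVec] using h) (by simpa [neg_mulVec] using h')
        (by simpa [neg_mulVec] using hneg)
      exact ⟨-α, fun x => by simpa [neg_mulVec] using hα x⟩
    push Not at hpos hneg
    obtain ⟨v, hv⟩ := hpos
    obtain ⟨u, hu⟩ := hneg
    exact exists_of_indefinite hM hN h hu hv
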